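/- arXiv:2211.14910 — 2 statements merged into one kernel-verified Lean document; each statement's English description precedes it below -/
import Mathlib

section
/- Let G be a finite group and H a subgroup attaining the maximum Chermak–Delgado measure of G. Then a subgroup K ≤ H attains the maximum Chermak–Delgado measure of H if and only if Z(H) ≤ K and K attains the maximum Chermak–Delgado measure of G. -/
/-- The Chermak–Delgado measure of a subgroup. -/
noncomputable def cdMeasure {G : Type*} [Group G] (H : Subgroup G) : ℕ :=
  Nat.card H * Nat.card (Subgroup.centralizer (H : Set G))

/-!
Let `L ≤ J ≤ H`. Inside `C_G(L)` the subgroups `C_G(J)` and `C_H(L)` meet in `C_H(J)`, so the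
product formula shows that the ratio `m_H / m_G` can only grow from `L` to `J`. For `H ∈ CD(G)`,
comparing with `J = H` gives `H ∈ CD(H)`, and `L ∈ CD(G)` whenever `L ∈ CD(H)`; moreover `L ∈ CD(H)`
is its own double centralizer in `H`, hence contains `Z(H)`. Conversely `Z(H) = C_H(H)` is in
`CD(H)`, so if `Z(H) ≤ J` and `J ∈ CD(G)`, comparing `L = Z(H)` with `J` gives `J ∈ CD(H)`.
-/

section Centralizer

open Subgroup

variable {G N : Type*} [Group G] [Group N]

theorem card_inf_mul_relIndex (A B : Subgroup G) :
    Nat.card (A ⊓ B : Subgroup G) * A.relIndex B = Nat.card B := by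
  rw [← relIndex_bot_left, relIndex_inf_mul_relIndex, bot_inf_eq, relIndex_bot_left]

theorem card_mul_card_le_card_inf_mul_card {A B C : Subgroup G} [Finite C]
    (hA : A ≤ C) (hB : B ≤ C) :
    Nat.card A * Nat.card B ≤ Nat.card (A ⊓ B : Subgroup G) * Nat.card C := by
  have hAC : Nat.card A * A.relIndex C = Nat.card C := by
    simpa only [inf_eq_left.mpr hA] using card_inf_mul_relIndex A C
  have hrel : A.relIndex B ≤ A.relIndex C := relIndex_le_of_le_right hB index_ne_zero_of_finite
  calc Nat.card A * Nat.card B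
      = Nat.card (A ⊓ B : Subgroup G) * (Nat.card A * A.relIndex B) := by
        rw [← card_inf_mul_relIndex A B, mul_left_comm]
    _ ≤ Nat.card (A ⊓ B : Subgroup G) * (Nat.card A * A.relIndex C) := by gcongr
    _ = Nat.card (A ⊓ B : Subgroup G) * Nat.card C := by rw [hAC]

theorem comap_centralizer_image {f : N →* G} (hf : Function.Injective f) (s : Set N) :
    (centralizer (f '' s)).comap f = centralizer s := by
  ext x
  simp only [mem_comap, mem_centralizer_iff, Set.forall_mem_image, ← map_mul, hf.eq_iff]

theorem map_centralizer_eq_range_inf {f : N →* G} (hf : Function.Injective f) (s : Set N) :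
    (centralizer s).map f = f.range ⊓ centralizer (f '' s) := by
  rw [← comap_centralizer_image hf, map_comap_eq]

theorem card_centralizer_mul_card_centralizer_image_le {f : N →* G} (hf : Function.Injective f)
    {s t : Set N} [Finite (centralizer (f '' s))] (hst : s ⊆ t) :
    Nat.card (centralizer s) * Nat.card (centralizer (f '' t)) ≤
      Nat.card (centralizer t) * Nat.card (centralizer (f '' s)) := by
  have hts : centralizer (f '' t) ≤ centralizer (f '' s) := centralizer_le (Set.image_mono hst)
  have hinf : (centralizer s).map f ⊓ centralizer (f '' t) = (centralizer t).map f := by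
    rw [map_centralizer_eq_range_inf hf, map_centralizer_eq_range_inf hf, inf_assoc,
      inf_eq_right.mpr hts]
  simpa only [hinf, card_map_of_injective hf] using
    card_mul_card_le_card_inf_mul_card (map_centralizer_le_centralizer_image s f) hts

end Centralizer

section ChermakDelgado

open Subgroup

variable {G N : Type*} [Group G] [Group N]

theorem cdMeasure_pos [Finite G] (H : Subgroup G) : 0 < cdMeasure H :=
  Nat.mul_pos Nat.card_pos Nat.card_pos

theorem cdMeasure_le_cdMeasure_centralizer (H : Subgroup G)
    [Finite (centralizer (centralizer (H : Set G) : Set G))] :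
    cdMeasure H ≤ cdMeasure (centralizer (H : Set G)) := by
  rw [cdMeasure, cdMeasure, mul_comm]
  exact Nat.mul_le_mul_left _ (card_le_of_le (le_centralizer_iff.mp le_rfl))

theorem cdMeasure_mul_cdMeasure_map_le [Finite G] {f : N →* G} (hf : Function.Injective f)
    {L J : Subgroup N} (hLJ : L ≤ J) :
    cdMeasure L * cdMeasure (J.map f) ≤ cdMeasure J * cdMeasure (L.map f) := by
  have hcent := card_centralizer_mul_card_centralizer_image_le hf (SetLike.coe_subset_coe.mpr hLJ)
  calc cdMeasure L * cdMeasure (J.map f)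
      = Nat.card L * Nat.card J *
          (Nat.card (centralizer (L : Set N)) * Nat.card (centralizer (f '' J))) := by
        simp only [cdMeasure, card_map_of_injective hf, coe_map]
        ring
    _ ≤ Nat.card L * Nat.card J *
          (Nat.card (centralizer (J : Set N)) * Nat.card (centralizer (f '' L))) := by gcongr
    _ = cdMeasure J * cdMeasure (L.map f) := by
        simp only [cdMeasure, card_map_of_injective hf, coe_map]
        ring

theorem cdMeasure_le_of_cdMeasure_map_le [Finite G] {f : N →* G} (hf : Function.Injective f)
    {L J : Subgroup N} (hLJ : L ≤ J) (h : cdMeasure (L.map f) ≤ cdMeasure (J.map f)) :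
    cdMeasure L ≤ cdMeasure J :=
  Nat.le_of_mul_le_mul_right
    ((cdMeasure_mul_cdMeasure_map_le hf hLJ).trans (Nat.mul_le_mul_left _ h)) (cdMeasure_pos _)

theorem cdMeasure_map_le_of_cdMeasure_le [Finite G] {f : N →* G} (hf : Function.Injective f)
    {L J : Subgroup N} (hLJ : L ≤ J) (h : cdMeasure J ≤ cdMeasure L) :
    cdMeasure (J.map f) ≤ cdMeasure (L.map f) := by
  have : Finite N := Finite.of_injective f hf
  exact Nat.le_of_mul_le_mul_left
    ((cdMeasure_mul_cdMeasure_map_le hf hLJ).trans (Nat.mul_le_mul_right _ h)) (cdMeasure_pos L)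

/-- Membership in the Chermak–Delgado lattice `CD(G)`. It is a predicate rather than a set of
subgroups, so that it unfolds to the maximality condition on `cdMeasure`. -/
def IsChermakDelgado (H : Subgroup G) : Prop :=
  ∀ K : Subgroup G, cdMeasure K ≤ cdMeasure H

namespace IsChermakDelgado

theorem centralizer_centralizer [Finite G] {K : Subgroup G} (hK : IsChermakDelgado K) :
    centralizer (centralizer (K : Set G) : Set G) = K := by
  have hcard : Nat.card (centralizer (centralizer (K : Set G) : Set G)) ≤ Nat.card K := by
    refine Nat.le_of_mul_le_mul_left ?_ (Nat.card_pos (α := centralizer (K : Set G)))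
    exact (hK (centralizer (K : Set G))).trans_eq (mul_comm _ _)
  exact (eq_of_le_of_card_ge (le_centralizer_iff.mp le_rfl) hcard).symm

theorem center_le [Finite G] {K : Subgroup G} (hK : IsChermakDelgado K) : center G ≤ K :=
  (center_le_centralizer _).trans_eq hK.centralizer_centralizer

protected theorem centralizer [Finite G] {K : Subgroup G} (hK : IsChermakDelgado K) :
    IsChermakDelgado (centralizer (K : Set G)) :=
  fun J ↦ (hK J).trans (cdMeasure_le_cdMeasure_centralizer K)

theorem center_of_top [Finite G] (hG : IsChermakDelgado (⊤ : Subgroup G)) :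
    IsChermakDelgado (center G) := by
  simpa only [coe_top, centralizer_univ] using hG.centralizer

theorem top_of_range [Finite G] {f : N →* G} (hf : Function.Injective f)
    (hN : IsChermakDelgado f.range) : IsChermakDelgado (⊤ : Subgroup N) := by
  rw [MonoidHom.range_eq_map] at hN
  exact fun L ↦ cdMeasure_le_of_cdMeasure_map_le hf le_top (hN (L.map f))

theorem map_of_range [Finite G] {f : N →* G} (hf : Function.Injective f)
    (hN : IsChermakDelgado f.range) {J : Subgroup N} (hJ : IsChermakDelgado J) :
    IsChermakDelgado (J.map f) := by
  rw [MonoidHom.range_eq_map] at hN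
  exact fun L ↦ (hN L).trans (cdMeasure_map_le_of_cdMeasure_le hf le_top (hJ ⊤))

theorem of_center_le_of_map [Finite G] {f : N →* G} (hf : Function.Injective f)
    (hN : IsChermakDelgado f.range) {J : Subgroup N} (hZJ : center N ≤ J)
    (hJ : IsChermakDelgado (J.map f)) : IsChermakDelgado J := by
  have : Finite N := Finite.of_injective f hf
  have hZ : IsChermakDelgado (center N) := (hN.top_of_range hf).center_of_top
  exact fun L ↦ (hZ L).trans (cdMeasure_le_of_cdMeasure_map_le hf hZJ (hJ ((center N).map f)))

end IsChermakDelgado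

theorem isChermakDelgado_iff_center_le_and_map [Finite G] {f : N →* G} (hf : Function.Injective f)
    (hN : IsChermakDelgado f.range) {J : Subgroup N} :
    IsChermakDelgado J ↔ center N ≤ J ∧ IsChermakDelgado (J.map f) := by
  have : Finite N := Finite.of_injective f hf
  exact ⟨fun hJ ↦ ⟨hJ.center_le, hN.map_of_range hf hJ⟩,
    fun h ↦ hN.of_center_le_of_map hf h.1 h.2⟩

end ChermakDelgado

theorem cd_of_cd_member
    (G : Type*) [Group G] [Finite G] (H : Subgroup G)
    (hH : ∀ K : Subgroup G, cdMeasure K ≤ cdMeasure H)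
    (K : Subgroup G) (hKH : K ≤ H) :
    (∀ J : Subgroup H, cdMeasure J ≤ cdMeasure (K.subgroupOf H)) ↔
      (Subgroup.center H ≤ K.subgroupOf H ∧
        ∀ J : Subgroup G, cdMeasure J ≤ cdMeasure K) := by
  have hrange : IsChermakDelgado H.subtype.range := by rwa [Subgroup.range_subtype]
  have hmap : (K.subgroupOf H).map H.subtype = K := Subgroup.map_subgroupOf_eq_of_le hKH
  have h := isChermakDelgado_iff_center_le_and_map (J := K.subgroupOf H) H.subtype_injective hrange
  rwa [hmap] at h
end

section
/- Let G be a finite group such that the identity subgroup, G itself, and a normal Sylow 3-subgroup H₃ of order 3 behave as follows: the Sylow 2-subgroups of G have order 2, G is not nilpotent, and exactly five subgroups of G fail to attain the maximum Chermak–Delgado measure. Then G is isomorphic to the symmetric group S₃. More precisely: if G is a finite non-nilpotent group with δ_CD(G) = 5, then G ≅ S₃. -/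
/-!
Subgroups of maximal measure form a set that is stable under automorphisms, and any two of them
permute. Hence a subgroup between a Sylow subgroup `P` and its normalizer cannot have maximal
measure unless `P` is normal: it would permute with all its conjugates, and Sylow's theorem in the
product of two of them forces the conjugates of `P` to coincide.

So a non-normal `P` accounts for `n_p` subgroups outside `CD(G)`. Further ones come from
divisibility: all members of `CD(G)` have the same measure, so if `d` divides the measures of some
subgroups and not those of some others, one of the two families misses `CD(G)`. For a Sylow
`q`-subgroup `R` with `q ≠ p`, the number `d = q * |R|` divides no measure of a `p`-subgroup but
divides, for instance, the measure of a subgroup of order `q` centralized by `R`.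

With at most five subgroups outside `CD(G)` this leaves `N_G(P) = P` and `(p, n_p) = (2, 3)` or
`(3, 4)`. The second case is excluded because `4` divides `|G|`; in the first, `|G| = 3|P|`, and
`|P| > 2` would produce three further subgroups outside `CD(G)`. Thus `|G| = 6`, and `G` acts
faithfully on the three cosets of `P`.
-/

open Subgroup
open scoped Pointwise

section Subgroups

variable {G : Type*} [Group G]

theorem card_mul_mul_card_inf (H K : Subgroup G) :
    Nat.card (H * K : Set G) * Nat.card (H ⊓ K : Subgroup G) = Nat.card H * Nat.card K := by
  have hsmul (h : H) : h • ((1 : G) : G ⧸ K) = ((h : G) : G ⧸ K) :=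
    congrArg ((↑) : G → G ⧸ K) (mul_one (h : G))
  have horbit : ((↑) : G → G ⧸ K) '' H = MulAction.orbit H ((1 : G) : G ⧸ K) := by
    ext x
    simp [MulAction.mem_orbit_iff, hsmul]
  have hstab : MulAction.stabilizer H ((1 : G) : G ⧸ K) = K.subgroupOf H := by
    ext h
    rw [MulAction.mem_stabilizer_iff, hsmul, eq_comm, QuotientGroup.eq, inv_one, one_mul,
      mem_subgroupOf]
  have himage : Nat.card (((↑) : G → G ⧸ K) '' H) = (H ⊓ K).relIndex H := by
    rw [horbit, Nat.card_coe_set_eq, ← MulAction.index_stabilizer, hstab, inf_relIndex_left,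
      relIndex]
  have hlagrange : (H ⊓ K).relIndex H * Nat.card (H ⊓ K : Subgroup G) = Nat.card H := by
    rw [mul_comm, ← relIndex_bot_left, ← relIndex_bot_left,
      relIndex_mul_relIndex _ _ _ bot_le inf_le_left]
  rw [card_mul_eq_card_subgroup_mul_card_quotient, himage, mul_assoc, hlagrange, mul_comm]

theorem mul_subset_coe_sup (H K : Subgroup G) : (H * K : Set G) ⊆ (H ⊔ K : Subgroup G) :=
  Set.mul_subset_iff.2 fun _ hx _ hy => mul_mem_sup hx hy

theorem centralizer_inf_centralizer_le_centralizer_sup (H K : Subgroup G) :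
    centralizer (H : Set G) ⊓ centralizer (K : Set G) ≤
      centralizer ((H ⊔ K : Subgroup G) : Set G) :=
  le_centralizer_iff.1 <|
    sup_le (le_centralizer_iff.1 inf_le_left) (le_centralizer_iff.1 inf_le_right)

theorem centralizer_sup_centralizer_le_centralizer_inf (H K : Subgroup G) :
    centralizer (H : Set G) ⊔ centralizer (K : Set G) ≤
      centralizer ((H ⊓ K : Subgroup G) : Set G) :=
  sup_le (centralizer_le inf_le_left) (centralizer_le inf_le_right)

theorem relIndex_centralizer_normalizer_dvd_totient (H : Subgroup G) [Finite H] [IsCyclic H] :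
    (centralizer (H : Set G)).relIndex (normalizer (H : Set G)) ∣ (Nat.card H).totient := by
  rw [relIndex, ← normalizerMonoidHom_ker, index_ker, ← IsCyclic.card_mulAut]
  exact card_subgroup_dvd_card _

theorem index_centralizer_dvd_totient (H : Subgroup G) [H.Normal] [Finite H] [IsCyclic H] :
    (centralizer (H : Set G)).index ∣ (Nat.card H).totient := by
  rw [← relIndex_top_right, ← normalizer_eq_top H]
  exact relIndex_centralizer_normalizer_dvd_totient H

theorem normalCore_eq_bot_of_card_prime {H : Subgroup G} (hH : (Nat.card H).Prime)
    (hn : ¬ H.Normal) : H.normalCore = ⊥ := by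
  have : Finite H := Nat.finite_of_card_ne_zero hH.ne_zero
  rcases (Nat.dvd_prime hH).1 (card_dvd_of_le H.normalCore_le) with hcard | hcard
  · exact card_eq_one.1 hcard
  · refine absurd ?_ hn
    rw [← eq_of_le_of_card_ge H.normalCore_le hcard.ge]
    infer_instance

theorem card_bot_ne_card_of_not_normal {H : Subgroup G} (hH : ¬ H.Normal) :
    Nat.card (⊥ : Subgroup G) ≠ Nat.card H := by
  intro hcard
  rw [card_bot] at hcard
  exact hH (card_eq_one.1 hcard.symm ▸ inferInstance)

theorem nonempty_mulEquiv_perm_of_normalCore_eq_bot {H : Subgroup G} (hcore : H.normalCore = ⊥)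
    {n : ℕ} (hindex : H.index = n) (hcard : Nat.card G = n.factorial) :
    Nonempty (G ≃* Equiv.Perm (Fin n)) := by
  have : Finite G := Nat.finite_of_card_ne_zero (hcard ▸ n.factorial_ne_zero)
  have hinj : Function.Injective (MulAction.toPermHom G (G ⧸ H)) := by
    rwa [← MonoidHom.ker_eq_bot_iff, ← normalCore_eq_ker]
  have hbij : Function.Bijective (MulAction.toPermHom G (G ⧸ H)) :=
    (Nat.bijective_iff_injective_and_card _).2
      ⟨hinj, by rw [Nat.card_perm, ← index_eq_card, hindex, hcard]⟩
  exact ⟨(MulEquiv.ofBijective _ hbij).trans (Finite.equivFinOfCardEq hindex).permCongrHom⟩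

end Subgroups

section PGroups

variable {G : Type*} [Group G] {p q : ℕ} [Fact p.Prime]

theorem not_dvd_card_of_isPGroup [Finite G] (hG : IsPGroup p G) (hq : q.Prime) (hpq : p ≠ q) :
    ¬ q ∣ Nat.card G := by
  obtain ⟨k, hk⟩ := IsPGroup.iff_card.1 hG
  rw [hk]
  exact fun hdvd => hpq ((Nat.prime_dvd_prime_iff_eq hq Fact.out).1 (hq.dvd_of_dvd_pow hdvd)).symm

theorem exists_le_card_eq_prime_le_centralizer {R : Subgroup G} [Finite R] (hR : IsPGroup p R)
    (hne : R ≠ ⊥) : ∃ T ≤ R, Nat.card T = p ∧ R ≤ centralizer (T : Set G) := by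
  have := (nontrivial_iff_ne_bot R).2 hne
  have := hR.center_nontrivial
  have hdvd : p ∣ Nat.card (center R) :=
    (hR.to_subgroup _).card_eq_or_dvd.resolve_left Finite.one_lt_card.ne'
  obtain ⟨z, hz⟩ := exists_prime_orderOf_dvd_card' p hdvd
  refine ⟨zpowers (z : G), zpowers_le.2 z.1.2, ?_, ?_⟩
  · rw [Nat.card_zpowers, orderOf_coe, orderOf_coe, hz]
  · refine le_centralizer_iff.1 (zpowers_le.2 (mem_centralizer_iff.2 fun r hr => ?_))
    exact congrArg Subtype.val (mem_center_iff.1 z.2 ⟨r, hr⟩)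

theorem dvd_card_sylow_of_not_normal {P : Sylow p G} (hP : ¬ (P : Subgroup G).Normal) :
    p ∣ Nat.card P :=
  P.2.card_eq_or_dvd.resolve_left fun hcard => hP (card_eq_one.1 hcard ▸ inferInstance)

variable [Finite (Sylow p G)]

theorem sylow_normal_of_sylow_normal {P Q : Sylow p G} (hQ : (Q : Subgroup G).Normal) :
    (P : Subgroup G).Normal := by
  have := Sylow.unique_of_normal Q hQ
  exact P.normal_of_subsingleton

theorem lt_card_sylow_of_not_normal {P : Sylow p G} (hP : ¬ (P : Subgroup G).Normal) :
    p < Nat.card (Sylow p G) := by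
  have hne : Nat.card (Sylow p G) ≠ 1 := fun hone => by
    have := (Nat.card_eq_one_iff_unique.1 hone).1
    exact hP P.normal_of_subsingleton
  have hpos : 0 < Nat.card (Sylow p G) := Nat.card_pos
  have hdvd : p ∣ Nat.card (Sylow p G) - 1 :=
    (Nat.modEq_iff_dvd' hpos).1 (card_sylow_modEq_one p G).symm
  have := Nat.le_of_dvd (by omega) hdvd
  omega

theorem sylow_normalizer_injective {p : ℕ} :
    Function.Injective fun Q : Sylow p G => normalizer (Q : Set G) := by
  intro Q R h
  have hQR : (Q : Subgroup G) ≤ normalizer (R : Set G) := le_normalizer.trans_eq h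
  have hle : (Q : Subgroup G) ≤ R := inf_eq_left.1 <|
    (Q.2.inf_normalizer_sylow R).symm.trans (inf_eq_left.2 hQR)
  exact (Sylow.ext (Q.3 R.2 hle)).symm

theorem card_normalizer_sylow_eq [Finite G] (P Q : Sylow p G) :
    Nat.card (normalizer (P : Set G)) = Nat.card (normalizer (Q : Set G)) := by
  have hP := (normalizer (P : Set G)).index_mul_card
  have hQ := (normalizer (Q : Set G)).index_mul_card
  rw [← Sylow.card_eq_index_normalizer] at hP hQ
  exact Nat.eq_of_mul_eq_mul_left Nat.card_pos (hP.trans hQ.symm)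

theorem card_sylow_mul_card_of_normalizer_eq {P : Sylow p G}
    (hN : normalizer (P : Set G) = P) : Nat.card (Sylow p G) * Nat.card P = Nat.card G := by
  rw [P.card_eq_index_normalizer, hN]
  exact index_mul_card _

theorem card_sylow_dvd_card_sylow [Finite G] [Fact q.Prime] {P : Sylow p G}
    (hN : normalizer (P : Set G) = P) (hpq : p ≠ q) (R : Sylow q G) :
    Nat.card R ∣ Nat.card (Sylow p G) := by
  have hcop : (Nat.card R).Coprime (Nat.card P) :=
    IsPGroup.coprime_card_of_ne q p hpq.symm (R : Subgroup G) (P : Subgroup G) R.2 P.2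
  refine hcop.dvd_of_dvd_mul_right ?_
  rw [card_sylow_mul_card_of_normalizer_eq hN]
  exact card_subgroup_dvd_card _

theorem sylow_normal_of_conj_sup_eq_mul {P : Sylow p G} {H : Subgroup G} (hPH : P ≤ H)
    (hHN : H ≤ normalizer (P : Set G))
    (hmul : ∀ g : G, ((MulAut.conj g • H ⊔ H : Subgroup G) : Set G) =
      (MulAut.conj g • H : Subgroup G) * H) :
    (P : Subgroup G).Normal := by
  have hfix : ∀ h ∈ H, h • P = P := fun h hh => Sylow.smul_eq_iff_mem_normalizer.2 (hHN hh)
  -- An element of `gHg⁻¹ ⊔ H` moving `P` to `g • P` factors as `k * h` with `k ∈ gHg⁻¹`, `h ∈ H`;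
  -- here `h` fixes `P`, while `k` fixes `g • P`.
  rw [← normalizer_eq_top_iff, eq_top_iff]
  refine fun g _ => Sylow.smul_eq_iff_mem_normalizer.1 ?_
  have hgP : ((g • P : Sylow p G) : Subgroup G) ≤ MulAut.conj g • H ⊔ H :=
    le_trans (map_mono hPH) le_sup_left
  obtain ⟨l, hl⟩ := MulAction.exists_smul_eq (MulAut.conj g • H ⊔ H : Subgroup G)
    (P.subtype (hPH.trans le_sup_right)) ((g • P).subtype hgP)
  rw [Sylow.smul_subtype] at hl
  have hlP : (l : G) • P = g • P := Sylow.subtype_injective hl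
  obtain ⟨_, ⟨h', hh', rfl⟩, h, hh, hlk⟩ := (hmul g).subset l.2
  set k : G := g * h' * g⁻¹ with hk
  have hkP : k • P = g • P :=
    calc k • P = (k * h) • P := by rw [mul_smul k h, hfix h hh]
      _ = (l : G) • P := congrArg (· • P) hlk
      _ = g • P := hlP
  have hkgP : k • g • P = g • P := by
    rw [hk, mul_smul, mul_smul, inv_smul_smul, hfix h' hh']
  exact MulAction.injective k (hkgP.trans hkP.symm)

end PGroups

section ChermakDelgado

variable {G : Type*} [Group G]

theorem card_mul_card_dvd_cdMeasure {A B H : Subgroup G} (hA : A ≤ H)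
    (hB : B ≤ centralizer (H : Set G)) : Nat.card A * Nat.card B ∣ cdMeasure H :=
  mul_dvd_mul (card_dvd_of_le hA) (card_dvd_of_le hB)

theorem card_mul_card_dvd_cdMeasure_self (H : Subgroup G) [IsMulCommutative H] :
    Nat.card H * Nat.card H ∣ cdMeasure H :=
  card_mul_card_dvd_cdMeasure le_rfl (le_centralizer H)

theorem card_mul_card_dvd_cdMeasure_centralizer (H : Subgroup G) [IsMulCommutative H] :
    Nat.card H * Nat.card H ∣ cdMeasure (centralizer (H : Set G)) :=
  card_mul_card_dvd_cdMeasure (le_centralizer H) (le_centralizer_iff.1 le_rfl)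

theorem cdMeasure_top_eq_cdMeasure_center :
    cdMeasure (⊤ : Subgroup G) = cdMeasure (center G) := by
  rw [cdMeasure, cdMeasure, coe_top, centralizer_univ, centralizer_center, mul_comm]

theorem cdMeasure_bot : cdMeasure (⊥ : Subgroup G) = Nat.card G := by
  have htop : centralizer ((⊥ : Subgroup G) : Set G) = ⊤ :=
    centralizer_eq_top_iff_subset.2 (bot_le (a := center G))
  rw [cdMeasure, htop, card_bot, one_mul, card_top]

theorem cdMeasure_le_cdMeasure_smul [Finite G] (H : Subgroup G) (a : MulAut G) :
    cdMeasure H ≤ cdMeasure (a • H) := by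
  refine Nat.mul_le_mul (Nat.card_congr (equivSMul a H).toEquiv).le ?_
  rw [Nat.card_congr (equivSMul a _).toEquiv]
  exact card_le_of_le (map_centralizer_le_centralizer_image _ _)

/-- Membership in the Chermak–Delgado lattice `CD(G)`: the measure of `H` is maximal. -/
def IsCD (H : Subgroup G) : Prop :=
  ∀ K : Subgroup G, cdMeasure K ≤ cdMeasure H

theorem IsCD.cdMeasure_eq {H K : Subgroup G} (hH : IsCD H) (hK : IsCD K) :
    cdMeasure H = cdMeasure K :=
  le_antisymm (hK H) (hH K)

theorem exists_card_eq_prime_mul_card_dvd_cdMeasure {q : ℕ} [Fact q.Prime] {R : Subgroup G}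
    [Finite R] (hR : IsPGroup q R) (hne : R ≠ ⊥) :
    ∃ T : Subgroup G, Nat.card T = q ∧
      q * Nat.card R ∣ cdMeasure T ∧ q * Nat.card R ∣ cdMeasure R := by
  obtain ⟨T, -, hT, hRT⟩ := exists_le_card_eq_prime_le_centralizer hR hne
  have hdvdT := card_mul_card_dvd_cdMeasure le_rfl hRT
  have hdvdR := card_mul_card_dvd_cdMeasure le_rfl (le_centralizer_iff.1 hRT)
  rw [hT] at hdvdT hdvdR
  exact ⟨T, hT, hdvdT, mul_comm q _ ▸ hdvdR⟩

theorem forall_not_isCD_or_forall_not_isCD_of_dvd {d : ℕ} {S T : Set (Subgroup G)}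
    (hS : ∀ H ∈ S, d ∣ cdMeasure H) (hT : ∀ H ∈ T, ¬ d ∣ cdMeasure H) :
    (∀ H ∈ S, ¬ IsCD H) ∨ ∀ H ∈ T, ¬ IsCD H := by
  by_contra! ⟨⟨H, hHS, hH⟩, K, hKT, hK⟩
  exact hT K hKT (hH.cdMeasure_eq hK ▸ hS H hHS)

variable [Finite G]

theorem IsCD.smul {H : Subgroup G} (hH : IsCD H) (a : MulAut G) : IsCD (a • H) :=
  fun K => (hH K).trans (cdMeasure_le_cdMeasure_smul H a)

theorem cdMeasure_mul_cdMeasure_le (H K : Subgroup G) :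
    cdMeasure H * cdMeasure K ≤ Nat.card (H * K : Set G) *
      Nat.card (centralizer (H : Set G) ⊓ centralizer (K : Set G) : Subgroup G) *
      cdMeasure (H ⊓ K) := by
  set A := centralizer (H : Set G)
  set B := centralizer (K : Set G)
  have hAB : Nat.card (A * B : Set G) ≤ Nat.card (centralizer ((H ⊓ K : Subgroup G) : Set G)) :=
    Nat.card_mono (Set.toFinite _) <| (mul_subset_coe_sup A B).trans
      (centralizer_sup_centralizer_le_centralizer_inf H K)
  calc cdMeasure H * cdMeasure K
      = (Nat.card H * Nat.card K) * (Nat.card A * Nat.card B) := by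
        rw [cdMeasure, cdMeasure, mul_mul_mul_comm]
    _ = Nat.card (H * K : Set G) * Nat.card (A ⊓ B : Subgroup G) *
          (Nat.card (H ⊓ K : Subgroup G) * Nat.card (A * B : Set G)) := by
        rw [← card_mul_mul_card_inf H K, ← card_mul_mul_card_inf A B]
        ring
    _ ≤ _ := Nat.mul_le_mul_left _ (Nat.mul_le_mul_left _ hAB)

theorem IsCD.coe_sup_eq_mul {H K : Subgroup G} (hH : IsCD H) (hK : IsCD K) :
    ((H ⊔ K : Subgroup G) : Set G) = H * K := by
  set D := centralizer (H : Set G) ⊓ centralizer (K : Set G)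
  have hHK : cdMeasure H ≤ Nat.card (H * K : Set G) * Nat.card D :=
    Nat.le_of_mul_le_mul_right
      ((cdMeasure_mul_cdMeasure_le H K).trans (Nat.mul_le_mul_left _ (hK (H ⊓ K))))
      (Nat.mul_pos Nat.card_pos Nat.card_pos)
  have hcard : Nat.card (H ⊔ K : Subgroup G) ≤ Nat.card (H * K : Set G) := by
    refine Nat.le_of_mul_le_mul_right (c := Nat.card D) ?_ Nat.card_pos
    calc Nat.card (H ⊔ K : Subgroup G) * Nat.card D
        ≤ cdMeasure (H ⊔ K) := Nat.mul_le_mul_left _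
          (card_le_of_le (centralizer_inf_centralizer_le_centralizer_sup H K))
      _ ≤ cdMeasure H := hH _
      _ ≤ Nat.card (H * K : Set G) * Nat.card D := hHK
  exact (Set.eq_of_subset_of_ncard_le (mul_subset_coe_sup H K) hcard (Set.toFinite _)).symm

theorem IsCD.sylow_normal {p : ℕ} [Fact p.Prime] {P : Sylow p G} {H : Subgroup G} (hH : IsCD H)
    (hPH : P ≤ H) (hHN : H ≤ normalizer (P : Set G)) : (P : Subgroup G).Normal :=
  sylow_normal_of_conj_sup_eq_mul hPH hHN fun g => (hH.smul (MulAut.conj g)).coe_sup_eq_mul hH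

theorem not_mul_card_sylow_dvd_cdMeasure {q : ℕ} [Fact q.Prime] (R : Sylow q G)
    {H : Subgroup G} (hH : ¬ q ∣ Nat.card H) : ¬ q * Nat.card R ∣ cdMeasure H := by
  intro hdvd
  obtain ⟨k, hk⟩ := IsPGroup.iff_card.1 R.2
  have hcop : (q * Nat.card R).Coprime (Nat.card H) := by
    rw [hk, ← pow_succ']
    exact ((Nat.Prime.coprime_iff_not_dvd Fact.out).2 hH).pow_left _
  have hdvdG : q * Nat.card R ∣ (R : Subgroup G).index * Nat.card R :=
    (index_mul_card (R : Subgroup G)).symm ▸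
      (hcop.dvd_of_dvd_mul_left hdvd).trans (card_subgroup_dvd_card _)
  exact R.not_dvd_index (Nat.dvd_of_mul_dvd_mul_right Nat.card_pos hdvdG)

end ChermakDelgado

section Counting

/-- The number `δ_CD(G)` of subgroups of `G` outside the Chermak–Delgado lattice. -/
noncomputable def deltaCD (G : Type*) [Group G] : ℕ :=
  Nat.card {H : Subgroup G // ¬ IsCD H}

variable {G : Type*} [Group G] [Finite G] {p q : ℕ} [Fact p.Prime] [Fact q.Prime] {P : Sylow p G}

theorem not_isCD_of_sylow_le_of_le_normalizer (hP : ¬ (P : Subgroup G).Normal) {Q : Sylow p G}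
    {H : Subgroup G} (hQH : Q ≤ H) (hHN : H ≤ normalizer (Q : Set G)) : ¬ IsCD H :=
  fun hH => hP (sylow_normal_of_sylow_normal (hH.sylow_normal hQH hHN))

theorem card_sylow_add_ncard_le_deltaCD (hP : ¬ (P : Subgroup G).Normal) {S : Set (Subgroup G)}
    (hS : ∀ H ∈ S, ¬ IsCD H) (hcard : ∀ H ∈ S, Nat.card H ≠ Nat.card P) :
    Nat.card (Sylow p G) + S.ncard ≤ deltaCD G := by
  have hdisj : Disjoint (Set.range fun Q : Sylow p G => (Q : Subgroup G)) S := by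
    rw [Set.disjoint_left]
    rintro _ ⟨Q, rfl⟩ hQ
    exact hcard _ hQ (Nat.card_congr (Q.equiv P).toEquiv)
  rw [← Set.ncard_range_of_injective (fun _ _ => Sylow.ext : Function.Injective
      fun Q : Sylow p G => (Q : Subgroup G)), ← Set.ncard_union_eq hdisj]
  refine Set.ncard_le_ncard (t := {H : Subgroup G | ¬ IsCD H}) ?_
  rintro H (⟨Q, rfl⟩ | hH)
  · exact not_isCD_of_sylow_le_of_le_normalizer hP le_rfl le_normalizer
  · exact hS H hH

theorem two_mul_card_sylow_le_deltaCD (hP : ¬ (P : Subgroup G).Normal)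
    (hN : normalizer (P : Set G) ≠ P) : 2 * Nat.card (Sylow p G) ≤ deltaCD G := by
  have hle := card_sylow_add_ncard_le_deltaCD hP
    (S := Set.range fun Q : Sylow p G => normalizer (Q : Set G))
    (by rintro _ ⟨Q, rfl⟩
        exact not_isCD_of_sylow_le_of_le_normalizer hP le_normalizer le_rfl)
    (by rintro _ ⟨Q, rfl⟩ hQ
        rw [card_normalizer_sylow_eq Q P] at hQ
        exact hN (eq_of_le_of_card_ge le_normalizer hQ.le).symm)
  rwa [Set.ncard_range_of_injective sylow_normalizer_injective, ← two_mul] at hle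

theorem card_ne_card_sylow_of_dvd (hpq : p ≠ q) {H : Subgroup G} (hq : q ∣ Nat.card H) :
    Nat.card H ≠ Nat.card P :=
  fun hcard => not_dvd_card_of_isPGroup P.2 (Fact.out : q.Prime) hpq (hcard ▸ hq)

theorem card_sylow_add_card_sylow_le_deltaCD {R : Sylow q G} (hpq : p ≠ q)
    (hP : ¬ (P : Subgroup G).Normal) (hR : ¬ (R : Subgroup G).Normal) :
    Nat.card (Sylow p G) + Nat.card (Sylow q G) ≤ deltaCD G := by
  rw [← Set.ncard_range_of_injective (fun _ _ => Sylow.ext : Function.Injective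
      fun Q : Sylow q G => (Q : Subgroup G))]
  refine card_sylow_add_ncard_le_deltaCD hP ?_ ?_
  · rintro _ ⟨Q, rfl⟩
    exact not_isCD_of_sylow_le_of_le_normalizer hR le_rfl le_normalizer
  · rintro _ ⟨Q, rfl⟩
    exact card_ne_card_sylow_of_dvd hpq <|
      dvd_card_sylow_of_not_normal fun hQ => hR (sylow_normal_of_sylow_normal hQ)

end Counting

section Bounds

variable {G : Type*} [Group G] [Finite G] {p q : ℕ} [Fact p.Prime] [Fact q.Prime] {P : Sylow p G}

theorem exists_prime_ne_dvd_card_of_sylow_not_normal (hP : ¬ (P : Subgroup G).Normal) :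
    ∃ q, q.Prime ∧ p ≠ q ∧ q ∣ Nat.card G := by
  have hindex : (P : Subgroup G).index ≠ 1 := fun hone =>
    hP (index_eq_one.1 hone ▸ inferInstance)
  refine ⟨_, Nat.minFac_prime hindex, ?_, (Nat.minFac_dvd _).trans (index_dvd_card _)⟩
  exact fun hp => P.not_dvd_index (hp.dvd.trans (Nat.minFac_dvd _))

theorem not_mul_card_sylow_dvd_cdMeasure_of_isPGroup (hpq : p ≠ q) (R : Sylow q G)
    {H : Subgroup G} (hH : IsPGroup p H) : ¬ q * Nat.card R ∣ cdMeasure H :=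
  not_mul_card_sylow_dvd_cdMeasure R (not_dvd_card_of_isPGroup hH Fact.out hpq)

theorem not_mul_card_sylow_dvd_cdMeasure_top (hpq : p ≠ q) (R : Sylow q G)
    (hN : normalizer (P : Set G) = P) : ¬ q * Nat.card R ∣ cdMeasure (⊤ : Subgroup G) := by
  have hZ : center G ≤ P :=
    (center_le_centralizer _).trans ((centralizer_le_normalizer _).trans_eq hN)
  rw [cdMeasure_top_eq_cdMeasure_center]
  exact not_mul_card_sylow_dvd_cdMeasure_of_isPGroup hpq R (P.2.to_le hZ)

theorem card_sylow_lt_deltaCD (hP : ¬ (P : Subgroup G).Normal) :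
    Nat.card (Sylow p G) < deltaCD G := by
  obtain ⟨q, hq, hpq, hqG⟩ := exists_prime_ne_dvd_card_of_sylow_not_normal hP
  have : Fact q.Prime := ⟨hq⟩
  let R : Sylow q G := default
  obtain ⟨T, hT, hdvdT, -⟩ :=
    exists_card_eq_prime_mul_card_dvd_cdMeasure R.2 (R.ne_bot_of_dvd_card hqG)
  have hdvdBot := not_mul_card_sylow_dvd_cdMeasure_of_isPGroup hpq R IsPGroup.of_bot
  rw [Nat.lt_iff_add_one_le]
  rcases forall_not_isCD_or_forall_not_isCD_of_dvd (S := {T}) (T := {⊥})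
    (by simpa using hdvdT) (by simpa using hdvdBot) with hS | hS
  · simpa using card_sylow_add_ncard_le_deltaCD hP hS
      (by simpa using card_ne_card_sylow_of_dvd hpq hT.symm.dvd)
  · simpa using card_sylow_add_ncard_le_deltaCD hP hS
      (by simpa using card_bot_ne_card_of_not_normal hP)

theorem card_sylow_add_two_le_deltaCD (hP : ¬ (P : Subgroup G).Normal)
    (hN : normalizer (P : Set G) = P) (hpq : p ≠ q) (hq : q ^ 2 ∣ Nat.card G) :
    Nat.card (Sylow p G) + 2 ≤ deltaCD G := by
  have hqG : q ∣ Nat.card G := (dvd_pow_self q two_ne_zero).trans hq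
  let R : Sylow q G := default
  have hqR : q ^ 2 ∣ Nat.card R := R.pow_dvd_card_of_pow_dvd_card hq
  have hRbot : (R : Subgroup G) ≠ ⊥ := R.ne_bot_of_dvd_card hqG
  obtain ⟨T, hT, hdvdT, hdvdR⟩ := exists_card_eq_prime_mul_card_dvd_cdMeasure R.2 hRbot
  have hRT : (R : Subgroup G) ≠ T := by
    intro hRT
    rw [hRT, hT] at hqR
    exact (Nat.le_of_dvd (Fact.out : q.Prime).pos hqR).not_gt
      (lt_self_pow₀ (Fact.out : q.Prime).one_lt one_lt_two)
  have hne : (⊥ : Subgroup G) ≠ ⊤ := ((bot_lt_iff_ne_bot.2 hRbot).trans_le le_top).ne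
  have hdvdBot := not_mul_card_sylow_dvd_cdMeasure_of_isPGroup hpq R IsPGroup.of_bot
  have hdvdTop := not_mul_card_sylow_dvd_cdMeasure_top hpq R hN
  rcases forall_not_isCD_or_forall_not_isCD_of_dvd (S := {↑R, T}) (T := {⊥, ⊤})
    (by simpa using ⟨hdvdR, hdvdT⟩) (by simpa using ⟨hdvdBot, hdvdTop⟩) with hS | hS
  · rw [← Set.ncard_pair hRT]
    refine card_sylow_add_ncard_le_deltaCD hP hS ?_
    rintro H (rfl | rfl)
    · exact card_ne_card_sylow_of_dvd hpq ((dvd_pow_self q two_ne_zero).trans hqR)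
    · exact card_ne_card_sylow_of_dvd hpq hT.symm.dvd
  · rw [← Set.ncard_pair hne]
    refine card_sylow_add_ncard_le_deltaCD hP hS ?_
    rintro H (rfl | rfl)
    · exact card_bot_ne_card_of_not_normal hP
    · exact card_ne_card_sylow_of_dvd hpq (card_top (G := G) ▸ hqG)

theorem not_isCD_bot_of_isCyclic (R : Subgroup G) [R.Normal] [IsCyclic R] (hR : R ≠ ⊥) :
    ¬ IsCD (⊥ : Subgroup G) := by
  intro hbot
  have hindex : (centralizer (R : Set G)).index < Nat.card R :=
    (Nat.le_of_dvd (Nat.totient_pos.2 Nat.card_pos) (index_centralizer_dvd_totient R)).trans_lt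
      (Nat.totient_lt _ ((one_lt_card_iff_ne_bot R).2 hR))
  refine (hbot R).not_gt ?_
  rw [cdMeasure_bot, ← index_mul_card (centralizer (R : Set G))]
  exact Nat.mul_lt_mul_of_pos_right hindex Nat.card_pos

theorem card_sylow_add_three_le_deltaCD (hP : ¬ (P : Subgroup G).Normal)
    (hN : normalizer (P : Set G) = P) (hPp : Nat.card P ≠ p) (hpq : p ≠ q) (R : Sylow q G)
    [(R : Subgroup G).Normal] (hR : Nat.card R = q) (hC : centralizer (R : Set G) ≠ R) :
    Nat.card (Sylow p G) + 3 ≤ deltaCD G := by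
  have : IsCyclic R := isCyclic_of_prime_card hR
  have hRC : (R : Subgroup G) ≤ centralizer (R : Set G) := le_centralizer (R : Subgroup G)
  have hqR : q ∣ Nat.card R := hR.symm.dvd
  have hqG : q ∣ Nat.card G := hqR.trans (card_subgroup_dvd_card _)
  have hRbot : ⊥ < (R : Subgroup G) := bot_lt_iff_ne_bot.2 (R.ne_bot_of_dvd_card hqG)
  have hbot : ¬ IsCD (⊥ : Subgroup G) := not_isCD_bot_of_isCyclic (R : Subgroup G) hRbot.ne'
  have hbotP := card_bot_ne_card_of_not_normal hP
  have hdvdR := card_mul_card_dvd_cdMeasure_self (R : Subgroup G)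
  have hdvdC := card_mul_card_dvd_cdMeasure_centralizer (R : Subgroup G)
  rw [hR] at hdvdR hdvdC
  obtain ⟨T, hTcard⟩ := Sylow.exists_subgroup_card_pow_prime (n := 1) p <| by
    simpa using (dvd_card_sylow_of_not_normal hP).trans (card_subgroup_dvd_card _)
  have hT : IsPGroup p T := IsPGroup.of_card hTcard
  rw [pow_one] at hTcard
  have hTbot : ⊥ ≠ T := fun h =>
    (Fact.out : p.Prime).ne_one (by rw [← hTcard, ← h, card_bot])
  have hTtop : ⊤ ≠ T := fun h =>
    not_dvd_card_of_isPGroup hT Fact.out hpq (by rwa [← h, card_top])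
  rcases forall_not_isCD_or_forall_not_isCD_of_dvd (d := q * Nat.card R)
    (S := {↑R, centralizer (R : Set G)}) (T := {⊤, T}) (by simpa [hR] using ⟨hdvdR, hdvdC⟩)
    (by simpa using ⟨not_mul_card_sylow_dvd_cdMeasure_top hpq R hN,
      not_mul_card_sylow_dvd_cdMeasure_of_isPGroup hpq R hT⟩) with hS | hS
  · rw [← Set.ncard_eq_three.2 ⟨_, _, _, hRbot.ne, (hRbot.trans_le hRC).ne, hC.symm, rfl⟩]
    refine card_sylow_add_ncard_le_deltaCD hP (Set.forall_mem_insert.2 ⟨hbot, hS⟩) ?_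
    rintro H (rfl | rfl | rfl)
    exacts [hbotP, card_ne_card_sylow_of_dvd hpq hqR,
      card_ne_card_sylow_of_dvd hpq (hqR.trans (card_dvd_of_le hRC))]
  · rw [← Set.ncard_eq_three.2 ⟨_, _, _, (hRbot.trans_le le_top).ne, hTbot, hTtop, rfl⟩]
    refine card_sylow_add_ncard_le_deltaCD hP (Set.forall_mem_insert.2 ⟨hbot, hS⟩) ?_
    rintro H (rfl | rfl | rfl)
    exacts [hbotP, card_ne_card_sylow_of_dvd hpq (card_top (G := G) ▸ hqG),
      fun h => hPp (h.symm.trans hTcard)]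

end Bounds

section Classification

variable {G : Type*} [Group G] [Finite G]

theorem card_eq_two_of_card_sylow_two_eq_three {P : Sylow 2 G} (hP : ¬ (P : Subgroup G).Normal)
    (hN : normalizer (P : Set G) = P) (hcard : Nat.card (Sylow 2 G) = 3) (hδ : deltaCD G ≤ 5) :
    Nat.card P = 2 := by
  have hG : 3 * Nat.card P = Nat.card G := hcard ▸ card_sylow_mul_card_of_normalizer_eq hN
  let R : Sylow 3 G := default
  have hRn : (R : Subgroup G).Normal := by
    by_contra hR
    have := card_sylow_add_card_sylow_le_deltaCD (by decide) hP hR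
    have := lt_card_sylow_of_not_normal hR
    omega
  have hR : Nat.card R = 3 := by
    have hdvd := card_sylow_dvd_card_sylow hN (by decide) R
    rw [hcard] at hdvd
    refine ((Nat.dvd_prime Nat.prime_three).1 hdvd).resolve_left fun hone => ?_
    exact R.ne_bot_of_dvd_card (Dvd.intro _ hG) (card_eq_one.1 hone)
  have : IsCyclic R := isCyclic_of_prime_card hR
  by_contra hP2
  have hC : centralizer (R : Set G) ≠ R := by
    intro hC
    have hindex : (R : Subgroup G).index = Nat.card P := by
      have := (R : Subgroup G).index_mul_card
      rw [hR] at this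
      omega
    have hdvd : (centralizer (R : Set G)).index ∣ (Nat.card R).totient :=
      index_centralizer_dvd_totient (R : Subgroup G)
    rw [hC, hindex, hR, Nat.totient_prime Nat.prime_three] at hdvd
    exact hP2 (Nat.dvd_antisymm hdvd (dvd_card_sylow_of_not_normal hP))
  have := card_sylow_add_three_le_deltaCD hP hN hP2 (by decide) R hR hC
  omega

theorem normalizer_sylow_eq_and_eq_two_and_card_sylow_eq_three {p : ℕ} [Fact p.Prime]
    {P : Sylow p G} (hP : ¬ (P : Subgroup G).Normal) (hδ : deltaCD G ≤ 5) :
    normalizer (P : Set G) = P ∧ p = 2 ∧ Nat.card (Sylow p G) = 3 := by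
  have hp : 2 ≤ p := (Fact.out : p.Prime).two_le
  have hlt := lt_card_sylow_of_not_normal hP
  have hδlt := card_sylow_lt_deltaCD hP
  have hmod := card_sylow_modEq_one p G
  have hN : normalizer (P : Set G) = P := by
    by_contra hN
    have := two_mul_card_sylow_le_deltaCD hP hN
    omega
  refine ⟨hN, ?_⟩
  obtain rfl | rfl : p = 2 ∨ p = 3 := by omega
  · rw [Nat.ModEq] at hmod
    omega
  · have hn : Nat.card (Sylow 3 G) = 4 := by omega
    have hfour : 2 ^ 2 ∣ Nat.card G := by
      rw [← card_sylow_mul_card_of_normalizer_eq hN, hn]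
      exact Dvd.intro _ rfl
    have := card_sylow_add_two_le_deltaCD hP hN (by decide) hfour
    omega

theorem s3_of_not_nilpotent_delta_cd_eq_five_general (hG : ¬ Group.IsNilpotent G)
    (hδ : deltaCD G ≤ 5) : Nonempty (G ≃* Equiv.Perm (Fin 3)) := by
  obtain ⟨p, _, P, hP⟩ :
      ∃ (p : ℕ) (_ : Fact p.Prime) (P : Sylow p G), ¬ (P : Subgroup G).Normal := by
    contrapose! hG
    exact (Group.isNilpotent_of_finite_tfae.out 0 3 rfl rfl).2 hG
  obtain ⟨hN, rfl, hcard⟩ := normalizer_sylow_eq_and_eq_two_and_card_sylow_eq_three hP hδ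
  have hP2 : Nat.card P = 2 := card_eq_two_of_card_sylow_two_eq_three hP hN hcard hδ
  have hindex : (P : Subgroup G).index = 3 := by
    rw [← hcard, P.card_eq_index_normalizer, hN]
  refine nonempty_mulEquiv_perm_of_normalCore_eq_bot
    (normalCore_eq_bot_of_card_prime (hP2.symm ▸ Nat.prime_two) hP) hindex ?_
  rw [← card_sylow_mul_card_of_normalizer_eq hN, hcard, hP2]
  rfl

end Classification

theorem s3_of_not_nilpotent_delta_cd_eq_five
    (G : Type*) [Group G] [Finite G] (hG : ¬ Group.IsNilpotent G)
    (h : Nat.card {H : Subgroup G //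
      ¬ ∀ K : Subgroup G, cdMeasure K ≤ cdMeasure H} = 5) :
    Nonempty (G ≃* Equiv.Perm (Fin 3)) :=
  s3_of_not_nilpotent_delta_cd_eq_five_general hG h.le
end
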